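/- arXiv:1112.5134 — 2 statements merged into one kernel-verified Lean document; each statement's English description precedes it below -/
import Mathlib

section
/- Let G be a connected graph with loop-edges e₁, …, e_c. For every tuple n = (n₁, …, n_c) of positive integers, let G^{(n)} be the refinement of G obtained by inserting n_i vertices in the interior of e_i for each i. Then for every divisor D ∈ Div(G), the rank r#_G(D) (defined via the refinement Ĝ inserting one vertex in each loop-edge) equals r_{G^{(n)}}(σ*D), where σ*: Div(G) → Div(G^{(n)}) is the natural map. -/
/-- A finite multigraph: vertices `V`, edges `E`, each edge has an (arbitrarily
ordered) pair of endpoints.  Loops are edges whose two endpoints coincide. -/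
structure Multigraph where
  V : Type
  E : Type
  [decV : DecidableEq V]
  [fintV : Fintype V]
  [decE : DecidableEq E]
  [fintE : Fintype E]
  ends : E → V × V

attribute [instance] Multigraph.decV Multigraph.fintV Multigraph.decE Multigraph.fintE

namespace Multigraph

variable (G : Multigraph)

/-- Two vertices are adjacent if some edge joins them. -/
def Adj (v w : G.V) : Prop := ∃ e : G.E, G.ends e = (v, w) ∨ G.ends e = (w, v)

/-- A multigraph is connected if it is nonempty and any two vertices are joined by a walk. -/
def Connected : Prop := Nonempty G.V ∧ ∀ v w : G.V, Relation.ReflTransGen G.Adj v w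

/-- The number of edges joining `v` and `w`. -/
def numEdges (v w : G.V) : ℕ :=
  (Finset.univ.filter fun e : G.E => G.ends e = (v, w) ∨ G.ends e = (w, v)).card

/-- The number of loops based at `v`. -/
def numLoops (v : G.V) : ℕ :=
  (Finset.univ.filter fun e : G.E => G.ends e = (v, v)).card

/-- The valency of `v` (loops count twice). -/
def valency (v : G.V) : ℕ :=
  ∑ e : G.E, ((if (G.ends e).1 = v then 1 else 0) + (if (G.ends e).2 = v then 1 else 0))

/-- The intersection product on vertices: `(v·w)` is the number of edges joining `v` and
`w` when `v ≠ w`, and `(v·v) = -val(v) + 2 loop(v)`. -/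
def inter (v w : G.V) : ℤ :=
  if v = w then -(G.valency v : ℤ) + 2 * (G.numLoops v : ℤ) else (G.numEdges v w : ℤ)

/-- The principal divisor `T_v = Σ_w (v·w) w`. -/
def T (v : G.V) : G.V → ℤ := fun w => G.inter v w

/-- The group of principal divisors, generated by the `T_v`. -/
def Prin : AddSubgroup (G.V → ℤ) := AddSubgroup.closure (Set.range G.T)

/-- The Jacobian group `Div(G)/Prin(G)`. -/
abbrev Jac := (G.V → ℤ) ⧸ G.Prin

/-- A divisor is effective if all its coefficients are nonnegative. -/
def Effective {α : Type} (D : α → ℤ) : Prop := ∀ v, 0 ≤ D v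

/-- The degree of a divisor. -/
def degree {α : Type} [Fintype α] (D : α → ℤ) : ℤ := ∑ v, D v

/-- The Baker–Norine rank of a divisor: `-1` if no effective divisor is linearly
equivalent to `D`, and otherwise the largest `k ≥ 0` such that for every effective
divisor `E` of degree `k` some effective divisor is linearly equivalent to `D - E`. -/
noncomputable def rank (D : G.V → ℤ) : ℤ :=
  sSup {r : ℤ | r = -1 ∨ (0 ≤ r ∧ ∀ E : G.V → ℤ, Effective E → degree E = r →
      ∃ F : G.V → ℤ, Effective F ∧ D - E - F ∈ G.Prin)}

/-- An edge is a loop if its two endpoints coincide. -/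
def IsLoop (e : G.E) : Prop := (G.ends e).1 = (G.ends e).2

/-- The refinement of `G` obtained by inserting `n e` new vertices in the interior of
each edge `e` (subdividing `e` into `n e + 1` edges). -/
def subdivide (n : G.E → ℕ) : Multigraph where
  V := G.V ⊕ (Σ e : G.E, Fin (n e))
  E := Σ e : G.E, Fin (n e + 1)
  ends := fun x =>
    (if h : (x.2 : ℕ) = 0 then Sum.inl (G.ends x.1).1
        else Sum.inr ⟨x.1, ⟨(x.2 : ℕ) - 1, by have := x.2.isLt; omega⟩⟩,
     if h : (x.2 : ℕ) = n x.1 then Sum.inl (G.ends x.1).2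
        else Sum.inr ⟨x.1, ⟨(x.2 : ℕ), by have := x.2.isLt; omega⟩⟩)

/-- The natural map `σ* : Div(G) → Div(G̃)` to a refinement, extending a divisor by
zero on the new vertices. -/
def subdivMap (n : G.E → ℕ) (D : G.V → ℤ) : (G.subdivide n).V → ℤ := Sum.elim D 0

/-- `Ĝ`: the loopless refinement obtained by inserting one new vertex in the interior of
every loop-edge. -/
def hat : Multigraph := G.subdivide fun e => if (G.ends e).1 = (G.ends e).2 then 1 else 0

/-- The rank `r#_G(D) := r_{Ĝ}(σ* D)`. -/
noncomputable def rankSharp (D : G.V → ℤ) : ℤ :=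
  G.hat.rank (G.subdivMap (fun e => if (G.ends e).1 = (G.ends e).2 then 1 else 0) D)

/-- A multigraph is loopless if no edge is a loop. -/
def Loopless : Prop := ∀ e : G.E, (G.ends e).1 ≠ (G.ends e).2

/-- The genus (first Betti number) `g = |E| - |V| + 1` of a connected graph. -/
def genus : ℤ := (Fintype.card G.E : ℤ) - (Fintype.card G.V : ℤ) + 1

/-- The canonical divisor `K#_G = Σ_v (val(v) - 2) v`. -/
def canonical : G.V → ℤ := fun v => (G.valency v : ℤ) - 2

/-- The loopless graph obtained from `G` by removing all loop-edges. -/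
def removeLoops : Multigraph where
  V := G.V
  E := {e : G.E // (G.ends e).1 ≠ (G.ends e).2}
  ends := fun e => G.ends e.1

/-- The virtual graph `G^ω` of a weighted graph `(G, ω)`: attach `ω v` loops at each
vertex `v`. -/
def virt (w : G.V → ℕ) : Multigraph where
  V := G.V
  E := G.E ⊕ (Σ v : G.V, Fin (w v))
  ends := Sum.elim G.ends fun p => (p.1, p.1)

/-- The rank of a divisor on the weighted graph `(G, ω)`: `r_{(G,ω)}(D) := r#_{G^ω}(D)`. -/
noncomputable def rankW (w : G.V → ℕ) (D : G.V → ℤ) : ℤ := (G.virt w).rankSharp D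

/-- The canonical divisor of the weighted graph `(G, ω)`. -/
def canonicalW (w : G.V → ℕ) : G.V → ℤ := fun v => (G.valency v : ℤ) + 2 * (w v : ℤ) - 2

/-- The genus of the weighted graph `(G, ω)`: `b₁(G) + Σ_v ω(v)`. -/
def genusW (w : G.V → ℕ) : ℤ := G.genus + ∑ v, (w v : ℤ)

/-- The rose `R_g`: one vertex and `g` loop-edges. -/
def rose (g : ℕ) : Multigraph where
  V := Unit
  E := Fin g
  ends := fun _ => ((), ())

/-- The subgraph of `G` determined by a set of vertices and a set of edges with
endpoints among them. -/
def subgraph (Vs : Finset G.V) (Es : Finset G.E)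
    (h : ∀ e ∈ Es, (G.ends e).1 ∈ Vs ∧ (G.ends e).2 ∈ Vs) : Multigraph where
  V := {x : G.V // x ∈ Vs}
  E := {e : G.E // e ∈ Es}
  ends := fun e => (⟨(G.ends e.1).1, (h e.1 e.2).1⟩, ⟨(G.ends e.1).2, (h e.1 e.2).2⟩)

/-- Extension of a divisor on a subgraph by zero: `ι_* : Div(H) → Div(G)`. -/
def iota (Vs : Finset G.V) (D : {x : G.V // x ∈ Vs} → ℤ) : G.V → ℤ :=
  fun x => if h : x ∈ Vs then D ⟨x, h⟩ else 0

end Multigraph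

namespace Multigraph

/-- A decomposition `G = H₁ ∨ H₂` of `G` associated to a cut vertex `v`:  `H₁`, `H₂` are
connected subgraphs with `V(H₁) ∩ V(H₂) = {v}`, `E(H₁) ∩ E(H₂) = ∅`, covering `G`. -/
structure Wedge (G : Multigraph) where
  v : G.V
  V1 : Finset G.V
  V2 : Finset G.V
  hv1 : v ∈ V1
  hv2 : v ∈ V2
  E1 : Finset G.E
  E2 : Finset G.E
  cover_V : V1 ∪ V2 = Finset.univ
  inter_V : V1 ∩ V2 = {v}
  cover_E : E1 ∪ E2 = Finset.univ
  disj_E : E1 ∩ E2 = ∅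
  ends1 : ∀ e ∈ E1, (G.ends e).1 ∈ V1 ∧ (G.ends e).2 ∈ V1
  ends2 : ∀ e ∈ E2, (G.ends e).1 ∈ V2 ∧ (G.ends e).2 ∈ V2
  conn1 : (G.subgraph V1 E1 ends1).Connected
  conn2 : (G.subgraph V2 E2 ends2).Connected

/-- The first subgraph `H₁` of a wedge decomposition. -/
def Wedge.H1 {G : Multigraph} (W : G.Wedge) : Multigraph := G.subgraph W.V1 W.E1 W.ends1

/-- The second subgraph `H₂` of a wedge decomposition. -/
def Wedge.H2 {G : Multigraph} (W : G.Wedge) : Multigraph := G.subgraph W.V2 W.E2 W.ends2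

variable (G : Multigraph)

/-- The divisor `div(f)` of an integer-valued function `f` on the vertices
(loops contribute zero). -/
def divOf (f : G.V → ℤ) : G.V → ℤ := fun v =>
  ∑ e : G.E, ((if (G.ends e).1 = v then f v - f (G.ends e).2 else 0)
            + (if (G.ends e).2 = v then f v - f (G.ends e).1 else 0))

/-- An isomorphism of multigraphs (edges may be matched with either orientation). -/
structure Iso (G H : Multigraph) where
  vEquiv : G.V ≃ H.V
  eEquiv : G.E ≃ H.E
  compat : ∀ e : G.E,
    H.ends (eEquiv e) = (vEquiv (G.ends e).1, vEquiv (G.ends e).2) ∨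
    H.ends (eEquiv e) = (vEquiv (G.ends e).2, vEquiv (G.ends e).1)

end Multigraph

/-!
A divisor on a subdivision of the loops of `G` is determined up to linear equivalence by its
push-forward to `G` and, for each loop `e`, its moment in `ℤ / (n e + 1)`, the Jacobian group of the
cycle replacing `e`. An effective divisor with push-forward `B` and prescribed moments exists if and
only if `B` dominates the sum of the base points of the loops with nonzero moment. Hence the rank
depends on `n` only through the sets of loops that can carry nonzero moments, and as soon as
`1 ≤ n e` for every loop `e`, these are all sets of loops.
-/

namespace Multigraph

variable {G : Multigraph}

/-- The vertex `v` regarded as a divisor of degree one. -/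
abbrev point (v : G.V) : G.V → ℤ := Pi.single v 1

theorem sum_smul_point (D : G.V → ℤ) : ∑ v, D v • point v = D := by
  ext w
  simp [Pi.single_apply]

section PrincipalDivisors

theorem divOf_eq_sum_edges (f : G.V → ℤ) :
    G.divOf f = ∑ e, (f (G.ends e).1 - f (G.ends e).2) •
      (point (G.ends e).1 - point (G.ends e).2) := by
  ext v
  simp only [divOf, Finset.sum_apply, Pi.smul_apply, Pi.sub_apply, Pi.single_apply, smul_eq_mul]
  refine Finset.sum_congr rfl fun e _ => ?_
  grind

theorem inter_eq_sum_edges (v w : G.V) :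
    G.inter v w = ∑ e, (point (G.ends e).2 v - point (G.ends e).1 v) *
      (point (G.ends e).1 w - point (G.ends e).2 w) := by
  simp only [inter, valency, numLoops, numEdges, Finset.card_filter, Pi.single_apply]
  push_cast
  split_ifs with hvw
  · rw [Finset.mul_sum, ← Finset.sum_neg_distrib, ← Finset.sum_add_distrib]
    refine Finset.sum_congr rfl fun e _ => ?_
    grind
  · refine Finset.sum_congr rfl fun e _ => ?_
    grind

theorem sum_smul_T (f : G.V → ℤ) : ∑ v, f v • G.T v = G.divOf (-f) := by
  ext w
  calc (∑ v, f v • G.T v) w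
    _ = ∑ v, f v * ∑ e, (point (G.ends e).2 v - point (G.ends e).1 v) *
          (point (G.ends e).1 w - point (G.ends e).2 w) := by
      simp only [Finset.sum_apply, Pi.smul_apply, smul_eq_mul, T, inter_eq_sum_edges]
    _ = ∑ e, (∑ v, f v * (point (G.ends e).2 v - point (G.ends e).1 v)) *
          (point (G.ends e).1 w - point (G.ends e).2 w) := by
      simp only [Finset.mul_sum, Finset.sum_mul, mul_assoc]
      exact Finset.sum_comm
    _ = G.divOf (-f) w := by
      rw [divOf_eq_sum_edges, Finset.sum_apply]
      refine Finset.sum_congr rfl fun e _ => ?_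
      have hsum : ∑ v, f v * (point (G.ends e).2 v - point (G.ends e).1 v) =
          f (G.ends e).2 - f (G.ends e).1 := by
        simp [mul_sub, Finset.sum_sub_distrib, Pi.single_apply]
      rw [hsum, Pi.smul_apply, Pi.sub_apply, smul_eq_mul, Pi.neg_apply, Pi.neg_apply, neg_sub_neg]

theorem mem_prin_iff {D : G.V → ℤ} : D ∈ G.Prin ↔ ∃ f, G.divOf f = D := by
  simp only [Prin, AddSubgroup.mem_closure_range_iff_of_fintype, sum_smul_T, eq_comm (a := D)]
  exact (neg_surjective.exists (p := fun f => G.divOf f = D)).symm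

theorem divOf_mem_prin (f : G.V → ℤ) : G.divOf f ∈ G.Prin :=
  mem_prin_iff.2 ⟨f, rfl⟩

end PrincipalDivisors

section Chains

variable (n : G.E → ℕ)

/-- A vertex of `G`, as a vertex of the subdivision `G.subdivide n`. -/
def oldVertex (v : G.V) : (G.subdivide n).V := Sum.inl v

/-- The `j`-th vertex inserted in the interior of `e`, counted from `0`. -/
def newVertex (e : G.E) (j : Fin (n e)) : (G.subdivide n).V := Sum.inr ⟨e, j⟩

@[simp] theorem oldVertex_inj {v w : G.V} : oldVertex n v = oldVertex n w ↔ v = w :=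
  Sum.inl_injective.eq_iff

@[simp] theorem newVertex_ne_oldVertex (e : G.E) (j : Fin (n e)) (v : G.V) :
    newVertex n e j ≠ oldVertex n v :=
  Sum.inr_ne_inl

@[simp] theorem subdivMap_oldVertex (D : G.V → ℤ) (v : G.V) :
    G.subdivMap n D (oldVertex n v) = D v := rfl

@[simp] theorem subdivMap_newVertex (D : G.V → ℤ) (e : G.E) (j : Fin (n e)) :
    G.subdivMap n D (newVertex n e j) = 0 := rfl

@[elab_as_elim] theorem subdivide_vertex_cases {motive : (G.subdivide n).V → Prop}
    (old : ∀ v, motive (oldVertex n v)) (new : ∀ e j, motive (newVertex n e j))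
    (x : (G.subdivide n).V) : motive x := by
  rcases x with v | ⟨e, j⟩
  exacts [old v, new e j]

theorem sum_subdivide_vertices {A : Type} [AddCommMonoid A] (F : (G.subdivide n).V → A) :
    ∑ x, F x = ∑ v, F (oldVertex n v) + ∑ e, ∑ j, F (newVertex n e j) :=
  (Fintype.sum_sum_type F).trans (congrArg _ (Fintype.sum_sigma _))

/-- The vertices of the path replacing the edge `e`, from `chain n e 0`, the first end of `e`, to
`chain n e (n e + 1)`, the second end; larger indices give the second end again. -/
def chain (e : G.E) (k : ℕ) : (G.subdivide n).V :=
  if k = 0 then oldVertex n (G.ends e).1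
  else if h : k - 1 < n e then newVertex n e ⟨k - 1, h⟩
  else oldVertex n (G.ends e).2

theorem chain_zero (e : G.E) : chain n e 0 = oldVertex n (G.ends e).1 := by
  simp [chain]

theorem chain_last (e : G.E) : chain n e (n e + 1) = oldVertex n (G.ends e).2 := by
  simp [chain]

theorem chain_succ (e : G.E) (j : Fin (n e)) : chain n e (j + 1) = newVertex n e j := by
  simp [chain]

theorem ends_subdivide (e : G.E) (i : Fin (n e + 1)) :
    (G.subdivide n).ends ⟨e, i⟩ = (chain n e i, chain n e (i + 1)) := by
  have hi := i.isLt
  ext1 <;> dsimp only [subdivide, chain, oldVertex, newVertex] <;> grind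

theorem sum_subdivide_edges {A : Type} [AddCommMonoid A]
    (F : (G.subdivide n).V → (G.subdivide n).V → A) :
    ∑ x, F ((G.subdivide n).ends x).1 ((G.subdivide n).ends x).2 =
      ∑ e, ∑ i ∈ Finset.range (n e + 1), F (chain n e i) (chain n e (i + 1)) := by
  refine (Fintype.sum_sigma _).trans (Finset.sum_congr rfl fun e _ => ?_)
  rw [← Fin.sum_univ_eq_sum_range fun i => F (chain n e i) (chain n e (i + 1))]
  exact Finset.sum_congr rfl fun i _ => by rw [ends_subdivide]

theorem divOf_subdivide (f : (G.subdivide n).V → ℤ) :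
    (G.subdivide n).divOf f = ∑ e, ∑ i ∈ Finset.range (n e + 1),
      (f (chain n e i) - f (chain n e (i + 1))) •
        (point (chain n e i) - point (chain n e (i + 1))) :=
  (divOf_eq_sum_edges f).trans
    (sum_subdivide_edges n fun x y => (f x - f y) • (point x - point y))

end Chains

section Pushforward

variable (n : G.E → ℕ)

/-- The map to `G` that contracts the interior of each subdivided edge to its first end. -/
def retract : (G.subdivide n).V → G.V :=
  Sum.elim id fun x => (G.ends x.1).1

@[simp] theorem retract_oldVertex (v : G.V) : retract n (oldVertex n v) = v := rfl

@[simp] theorem retract_newVertex (e : G.E) (j : Fin (n e)) :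
    retract n (newVertex n e j) = (G.ends e).1 := rfl

theorem retract_chain {e : G.E} (he : G.IsLoop e) (k : ℕ) :
    retract n (chain n e k) = (G.ends e).1 := by
  unfold chain
  split_ifs
  exacts [rfl, rfl, he.symm]

theorem sum_subdivide_edges_of_retract {n : G.E → ℕ} (hn : ∀ e, ¬ G.IsLoop e → n e = 0) {A : Type}
    [AddCommMonoid A] (F : (G.subdivide n).V → (G.subdivide n).V → A)
    (hF : ∀ x y, retract n x = retract n y → F x y = 0) :
    ∑ x, F ((G.subdivide n).ends x).1 ((G.subdivide n).ends x).2 =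
      ∑ e, F (oldVertex n (G.ends e).1) (oldVertex n (G.ends e).2) := by
  rw [sum_subdivide_edges]
  refine Finset.sum_congr rfl fun e _ => ?_
  by_cases he : G.IsLoop e
  · rw [hF (oldVertex n _) (oldVertex n _) he]
    exact Finset.sum_eq_zero fun i _ => hF _ _ (by simp only [retract_chain n he])
  · have hlast := chain_last n e
    rw [hn e he] at hlast
    rw [hn e he, Finset.sum_range_one, chain_zero, hlast]

/-- The push-forward of divisors along `retract`. -/
def push : ((G.subdivide n).V → ℤ) →ₗ[ℤ] (G.V → ℤ) :=
  Fintype.linearCombination ℤ fun x => point (retract n x)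

@[simp] theorem push_point (x : (G.subdivide n).V) : push n (point x) = point (retract n x) := by
  rw [push, Fintype.linearCombination_apply_single, one_smul]

theorem push_eq_sum (E : (G.subdivide n).V → ℤ) :
    push n E = (fun v => E (oldVertex n v)) +
      ∑ e, (∑ j, E (newVertex n e j)) • point (G.ends e).1 := by
  rw [push, Fintype.linearCombination_apply, sum_subdivide_vertices]
  simp only [retract_oldVertex, retract_newVertex, Finset.sum_smul,
    sum_smul_point fun v => E (oldVertex n v)]

theorem degree_push (E : (G.subdivide n).V → ℤ) : degree (push n E) = degree E := by
  simp only [degree, push, Fintype.linearCombination_apply, Finset.sum_apply, Pi.smul_apply,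
    smul_eq_mul]
  rw [Finset.sum_comm]
  simp [← Finset.mul_sum]

theorem subdivMap_eq_linearCombination (D : G.V → ℤ) :
    G.subdivMap n D = Fintype.linearCombination ℤ (fun v => point (oldVertex n v)) D := by
  ext x
  rw [Fintype.linearCombination_apply, Finset.sum_apply]
  cases x using subdivide_vertex_cases with
  | old w => simp [Pi.single_apply]
  | new e j => simp

@[simp] theorem push_subdivMap (D : G.V → ℤ) : push n (G.subdivMap n D) = D := by
  simp only [subdivMap_eq_linearCombination, Fintype.linearCombination_apply, map_sum, map_smul,
    push_point, retract_oldVertex, sum_smul_point]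

variable {n} in
theorem push_divOf (hn : ∀ e, ¬ G.IsLoop e → n e = 0) (f : (G.subdivide n).V → ℤ) :
    push n ((G.subdivide n).divOf f) = G.divOf fun v => f (oldVertex n v) := by
  simp only [divOf_eq_sum_edges, map_sum, map_smul, map_sub, push_point]
  exact sum_subdivide_edges_of_retract hn
    (fun x y => (f x - f y) • (point (retract n x) - point (retract n y)))
    fun x y hxy => by rw [hxy, sub_self, smul_zero]

variable {n} in
theorem subdivMap_divOf (hn : ∀ e, ¬ G.IsLoop e → n e = 0) (f : G.V → ℤ) :
    G.subdivMap n (G.divOf f) = (G.subdivide n).divOf fun x => f (retract n x) := by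
  simp only [subdivMap_eq_linearCombination, divOf_eq_sum_edges f, map_sum, map_smul, map_sub,
    Fintype.linearCombination_apply_single, one_smul]
  rw [divOf_eq_sum_edges]
  exact (sum_subdivide_edges_of_retract hn
    (fun x y => (f (retract n x) - f (retract n y)) • (point x - point y))
    fun x y hxy => by rw [hxy, sub_self, zero_smul]).symm

end Pushforward

section Moments

variable (n : G.E → ℕ)

/-- The function on the vertices of a subdivision with value `h k` at the interior vertex
`chain n e k` of `e` and zero elsewhere. -/
def onChain (e : G.E) {A : Type} [Zero A] (h : ℕ → A) : (G.subdivide n).V → A :=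
  Sum.elim 0 fun x => if x.1 = e then h (x.2 + 1) else 0

@[simp] theorem onChain_oldVertex (e : G.E) {A : Type} [Zero A] (h : ℕ → A) (v : G.V) :
    onChain n e h (oldVertex n v) = 0 := rfl

@[simp] theorem onChain_newVertex (e : G.E) {A : Type} [Zero A] (h : ℕ → A) (e' : G.E)
    (j : Fin (n e')) : onChain n e h (newVertex n e' j) = if e' = e then h (j + 1) else 0 := rfl

variable {n}

theorem onChain_chain {A : Type} [Zero A] {e : G.E} {h : ℕ → A} (hzero : h 0 = 0)
    (hlast : h (n e + 1) = 0) {e' : G.E} {k : ℕ} (hk : k ≤ n e' + 1) :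
    onChain n e h (chain n e' k) = if e' = e then h k else 0 := by
  unfold chain
  split_ifs <;> grind [onChain_oldVertex, onChain_newVertex]

theorem divOf_onChain {e : G.E} {h : ℕ → ℤ} (hzero : h 0 = 0) (hlast : h (n e + 1) = 0) :
    (G.subdivide n).divOf (onChain n e h) = ∑ i ∈ Finset.range (n e + 1),
      (h i - h (i + 1)) • (point (chain n e i) - point (chain n e (i + 1))) := by
  have honChain : ∀ e', ∀ i ∈ Finset.range (n e' + 1),
      onChain n e h (chain n e' i) - onChain n e h (chain n e' (i + 1)) =
        if e' = e then h i - h (i + 1) else 0 := by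
    intro e' i hi
    have hi := Finset.mem_range.1 hi
    rw [onChain_chain hzero hlast hi.le, onChain_chain hzero hlast hi]
    split_ifs <;> simp
  rw [divOf_subdivide, Finset.sum_eq_single_of_mem e (Finset.mem_univ e)]
  · exact Finset.sum_congr rfl fun i hi => by rw [honChain e i hi, if_pos rfl]
  · intro e' _ hne
    exact Finset.sum_eq_zero fun i hi => by rw [honChain e' i hi, if_neg hne, zero_smul]

theorem chain_sub_chain_zero_sub_mem_prin {e : G.E} {k : ℕ} (hk : k ≤ n e + 1) :
    point (chain n e k) - point (chain n e 0) - k • (point (chain n e 1) - point (chain n e 0)) ∈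
      (G.subdivide n).Prin := by
  -- The slope of `tent` changes only at positions `0`, `1` and `k`, so these carry its divisor.
  let tent : ℕ → ℤ := fun i => if i = 0 then 0 else -((k - i : ℕ) : ℤ)
  have tent_sub : ∀ i, tent i - tent (i + 1) = (if i = 0 then (k : ℤ) else 0) -
      if i < k then 1 else 0 := by
    intro i
    simp only [tent]
    grind
  refine mem_prin_iff.2 ⟨onChain n e tent, ?_⟩
  have hfilter : (Finset.range (n e + 1)).filter (· < k) = Finset.range k := by grind
  calc (G.subdivide n).divOf (onChain n e tent)
    _ = ∑ i ∈ Finset.range (n e + 1), ((if i = 0 then (k : ℤ) else 0) - if i < k then 1 else 0) •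
          (point (chain n e i) - point (chain n e (i + 1))) := by
      rw [divOf_onChain (by simp [tent]) (by simp [tent, hk])]
      simp only [tent_sub]
    _ = k • (point (chain n e 0) - point (chain n e 1)) -
          ∑ i ∈ Finset.range k, (point (chain n e i) - point (chain n e (i + 1))) := by
      simp [sub_smul, ite_smul, Finset.sum_sub_distrib, ← Finset.sum_filter, hfilter]
    _ = _ := by
      rw [Finset.sum_range_sub' fun i => point (chain n e i)]
      module

variable (n) in
/-- The position of a divisor on the cycle subdividing the loop `e`, which is the class in the
Jacobian group `ℤ / (n e + 1)` of that cycle. -/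
def moment (e : G.E) : ((G.subdivide n).V → ℤ) →ₗ[ℤ] ZMod (n e + 1) :=
  Fintype.linearCombination ℤ (onChain n e (Nat.cast : ℕ → ZMod (n e + 1)))

theorem moment_eq_sum (e : G.E) (E : (G.subdivide n).V → ℤ) :
    moment n e E = ∑ j : Fin (n e), E (newVertex n e j) • ((j + 1 : ℕ) : ZMod (n e + 1)) := by
  rw [moment, Fintype.linearCombination_apply, sum_subdivide_vertices,
    Finset.sum_eq_single_of_mem e (Finset.mem_univ e)]
  · simp
  · intro e' _ hne
    simp [hne]

@[simp] theorem moment_subdivMap (e : G.E) (D : G.V → ℤ) : moment n e (G.subdivMap n D) = 0 := by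
  simp [moment_eq_sum]

theorem moment_point_chain (e : G.E) {e' : G.E} {k : ℕ} (hk : k ≤ n e' + 1) :
    moment n e (point (chain n e' k)) = if e' = e then (k : ZMod (n e + 1)) else 0 := by
  rw [moment, Fintype.linearCombination_apply_single, one_smul,
    onChain_chain Nat.cast_zero (ZMod.natCast_self _) hk]

theorem isLoop_of_zmod_ne_zero (hn : ∀ e, ¬ G.IsLoop e → n e = 0) {e : G.E}
    {a : ZMod (n e + 1)} (ha : a ≠ 0) : G.IsLoop e := by
  by_contra he
  have hsub : Subsingleton (ZMod (n e + 1)) := by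
    rw [hn e he]
    exact inferInstanceAs (Subsingleton (ZMod 1))
  exact ha (Subsingleton.elim a 0)

theorem moment_divOf_of_isLoop {e : G.E} (he : G.IsLoop e) (f : (G.subdivide n).V → ℤ) :
    moment n e ((G.subdivide n).divOf f) = 0 := by
  have hstep : ∀ e', ∀ i ∈ Finset.range (n e' + 1),
      moment n e (point (chain n e' i)) - moment n e (point (chain n e' (i + 1))) =
        if e' = e then -1 else 0 := by
    intro e' i hi
    have hi := Finset.mem_range.1 hi
    rw [moment_point_chain e hi.le, moment_point_chain e hi]
    split_ifs <;> simp
  have hclosed : f (chain n e 0) = f (chain n e (n e + 1)) := by rw [chain_zero, chain_last, he]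
  simp only [divOf_subdivide, map_sum, map_smul, map_sub]
  rw [Finset.sum_eq_single_of_mem e (Finset.mem_univ e)]
  · calc ∑ i ∈ Finset.range (n e + 1), (f (chain n e i) - f (chain n e (i + 1))) •
          (moment n e (point (chain n e i)) - moment n e (point (chain n e (i + 1))))
      _ = ∑ i ∈ Finset.range (n e + 1), (f (chain n e i) - f (chain n e (i + 1))) •
            (-1 : ZMod (n e + 1)) :=
        Finset.sum_congr rfl fun i hi => by rw [hstep e i hi, if_pos rfl]
      _ = (f (chain n e 0) - f (chain n e (n e + 1))) • (-1 : ZMod (n e + 1)) := by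
        rw [← Finset.sum_smul, Finset.sum_range_sub' fun i => f (chain n e i)]
      _ = 0 := by rw [hclosed, sub_self, zero_smul]
  · intro e' _ hne
    exact Finset.sum_eq_zero fun i hi => by rw [hstep e' i hi, if_neg hne, smul_zero]

theorem moment_divOf (hn : ∀ e, ¬ G.IsLoop e → n e = 0) (e : G.E) (f : (G.subdivide n).V → ℤ) :
    moment n e ((G.subdivide n).divOf f) = 0 := by
  by_contra hne
  exact hne (moment_divOf_of_isLoop (isLoop_of_zmod_ne_zero hn hne) f)

end Moments

section LinearEquivalence

variable {n : G.E → ℕ}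

theorem succ_smul_chain_one_sub_mem_prin {e : G.E} (he : G.IsLoop e) :
    (n e + 1) • (point (chain n e 1) - point (chain n e 0)) ∈ (G.subdivide n).Prin := by
  have hend : chain n e (n e + 1) = chain n e 0 := by rw [chain_last, chain_zero, he]
  simpa [hend] using neg_mem (chain_sub_chain_zero_sub_mem_prin (le_refl (n e + 1)))

theorem sub_subdivMap_push_eq_sum (E : (G.subdivide n).V → ℤ) :
    E - G.subdivMap n (push n E) = ∑ e, ∑ j,
      E (newVertex n e j) • (point (newVertex n e j) - point (oldVertex n (G.ends e).1)) := by
  have hretract : G.subdivMap n (push n E) = ∑ x, E x • point (oldVertex n (retract n x)) := by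
    rw [subdivMap_eq_linearCombination, push, Fintype.linearCombination_apply ℤ _ E]
    simp only [map_sum, map_smul, Fintype.linearCombination_apply_single, one_smul]
  rw [hretract]
  nth_rw 1 [← sum_smul_point E]
  rw [← Finset.sum_sub_distrib, sum_subdivide_vertices]
  simp [smul_sub]

theorem sum_smul_newVertex_sub_mem_prin {e : G.E} (he : G.IsLoop e) {E : (G.subdivide n).V → ℤ}
    (hE : moment n e E = 0) :
    ∑ j, E (newVertex n e j) • (point (newVertex n e j) - point (oldVertex n (G.ends e).1)) ∈
      (G.subdivide n).Prin := by
  let step := point (chain n e 1) - point (chain n e 0)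
  obtain ⟨q, hq⟩ : ((n e + 1 : ℕ) : ℤ) ∣ ∑ j, E (newVertex n e j) * (j + 1 : ℕ) := by
    rw [← ZMod.intCast_zmod_eq_zero_iff_dvd, ← hE, moment_eq_sum]
    simp only [Int.cast_sum, Int.cast_mul, Int.cast_natCast, zsmul_eq_mul]
  have hsplit : ∑ j, E (newVertex n e j) •
        (point (newVertex n e j) - point (oldVertex n (G.ends e).1)) =
      ∑ j : Fin (n e), E (newVertex n e j) •
        (point (chain n e (j + 1)) - point (chain n e 0) - (j + 1 : ℕ) • step) +
      q • (n e + 1) • step := by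
    have hq_smul : q • (n e + 1) • step = (∑ j, E (newVertex n e j) * (j + 1 : ℕ)) • step := by
      rw [hq, mul_comm, mul_smul, natCast_zsmul]
    rw [hq_smul, Finset.sum_smul, ← Finset.sum_add_distrib]
    refine Finset.sum_congr rfl fun j _ => ?_
    rw [chain_succ, chain_zero, mul_smul, natCast_zsmul, ← smul_add, sub_add_cancel]
  rw [hsplit]
  exact add_mem
    (sum_mem fun j _ => zsmul_mem (chain_sub_chain_zero_sub_mem_prin (by omega)) _)
    (zsmul_mem (succ_smul_chain_one_sub_mem_prin he) q)

theorem mem_prin_subdivide_iff (hn : ∀ e, ¬ G.IsLoop e → n e = 0) {E : (G.subdivide n).V → ℤ} :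
    E ∈ (G.subdivide n).Prin ↔ push n E ∈ G.Prin ∧ ∀ e, moment n e E = 0 := by
  constructor
  · intro hE
    obtain ⟨f, rfl⟩ := mem_prin_iff.1 hE
    exact ⟨push_divOf hn f ▸ divOf_mem_prin _, fun e => moment_divOf hn e f⟩
  · rintro ⟨hpush, hmoment⟩
    obtain ⟨g, hg⟩ := mem_prin_iff.1 hpush
    have hσ : G.subdivMap n (push n E) ∈ (G.subdivide n).Prin := by
      rw [← hg, subdivMap_divOf hn]
      exact divOf_mem_prin _
    rw [← sub_add_cancel E (G.subdivMap n (push n E)), sub_subdivMap_push_eq_sum]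
    refine add_mem (sum_mem fun e _ => ?_) hσ
    by_cases he : G.IsLoop e
    · exact sum_smul_newVertex_sub_mem_prin he (hmoment e)
    · have : IsEmpty (Fin (n e)) := by rw [hn e he]; infer_instance
      simp

end LinearEquivalence

section Rank

variable {n : G.E → ℕ}

/-- The sum of the first ends of the edges in `S`; for a set of loops, the divisor of their base
points. -/
def basePoints (S : Finset G.E) : G.V → ℤ := ∑ e ∈ S, point (G.ends e).1

theorem point_nonneg (v : G.V) : 0 ≤ point v :=
  Pi.single_nonneg.2 zero_le_one

theorem one_le_sum_newVertex {F : (G.subdivide n).V → ℤ} (hF : Effective F)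
    {e : G.E} (he : moment n e F ≠ 0) : 1 ≤ ∑ j, F (newVertex n e j) := by
  contrapose! he
  have hsum : ∑ j, F (newVertex n e j) = 0 :=
    le_antisymm (Int.lt_add_one_iff.1 he) (Finset.sum_nonneg fun j _ => hF _)
  rw [Finset.sum_eq_zero_iff_of_nonneg fun j _ => hF _] at hsum
  rw [moment_eq_sum]
  exact Finset.sum_eq_zero fun j hj => by rw [hsum j hj, zero_smul]

theorem basePoints_le_push {F : (G.subdivide n).V → ℤ} (hF : Effective F) :
    basePoints {e | moment n e F ≠ 0} ≤ push n F := by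
  have hinner_nonneg : ∀ e, 0 ≤ ∑ j, F (newVertex n e j) :=
    fun e => Finset.sum_nonneg fun j _ => hF _
  calc basePoints {e | moment n e F ≠ 0}
    _ ≤ ∑ e with moment n e F ≠ 0, (∑ j, F (newVertex n e j)) • point (G.ends e).1 :=
      Finset.sum_le_sum fun e he => le_smul_of_one_le_left (point_nonneg _)
        (one_le_sum_newVertex hF (Finset.mem_filter.1 he).2)
    _ ≤ ∑ e, (∑ j, F (newVertex n e j)) • point (G.ends e).1 :=
      Finset.sum_le_sum_of_subset_of_nonneg (Finset.subset_univ _) fun e _ _ =>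
        smul_nonneg (hinner_nonneg e) (point_nonneg _)
    _ ≤ push n F := by
      rw [push_eq_sum]
      exact le_add_of_nonneg_left fun v => hF _

theorem exists_effective_of_basePoints_le (hn : ∀ e, ¬ G.IsLoop e → n e = 0) {B : G.V → ℤ}
    {m : ∀ e, ZMod (n e + 1)} (hB : basePoints {e | m e ≠ 0} ≤ B) :
    ∃ F, Effective F ∧ push n F = B ∧ ∀ e, moment n e F = m e := by
  refine ⟨G.subdivMap n (B - basePoints {e | m e ≠ 0}) +
    ∑ e with m e ≠ 0, point (chain n e (m e).val), ?_, ?_, fun e => ?_⟩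
  · refine add_nonneg (fun x => ?_) (Finset.sum_nonneg fun e _ => point_nonneg _)
    cases x using subdivide_vertex_cases with
    | old v => exact sub_nonneg.2 hB v
    | new e j => exact le_rfl
  · have hpush : ∀ e ∈ Finset.univ.filter (m · ≠ 0),
        push n (point (chain n e (m e).val)) = point (G.ends e).1 := by
      intro e he
      rw [push_point, retract_chain n (isLoop_of_zmod_ne_zero hn (Finset.mem_filter.1 he).2)]
    rw [map_add, push_subdivMap, map_sum, Finset.sum_congr rfl hpush]
    exact sub_add_cancel _ _
  · rw [map_add, moment_subdivMap, zero_add, map_sum]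
    simp only [moment_point_chain e (ZMod.val_lt _).le, Finset.sum_ite_eq', Finset.mem_filter_univ,
      ZMod.natCast_zmod_val, ite_not, ite_eq_right_iff]
    exact Eq.symm

theorem exists_effective_iff_basePoints_le (hn : ∀ e, ¬ G.IsLoop e → n e = 0) {B : G.V → ℤ}
    {m : ∀ e, ZMod (n e + 1)} :
    (∃ F, Effective F ∧ push n F = B ∧ ∀ e, moment n e F = m e) ↔
      basePoints {e | m e ≠ 0} ≤ B := by
  refine ⟨?_, exists_effective_of_basePoints_le hn⟩
  rintro ⟨F, hF, rfl, hm⟩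
  simpa only [hm] using basePoints_le_push hF

/-- The condition `r#_G(D) ≥ r` expressed on `G` itself: an effective divisor on a refinement enters
only through its push-forward `B` and the set `S` of loops on which its moment is nonzero. -/
def RankSharpGE (D : G.V → ℤ) (r : ℤ) : Prop :=
  ∀ S : Finset G.E, (∀ e ∈ S, G.IsLoop e) → ∀ B, basePoints S ≤ B → degree B = r →
    ∃ F, basePoints S ≤ F ∧ D - B - F ∈ G.Prin

theorem exists_effective_subdivide_iff (hn : ∀ e, ¬ G.IsLoop e → n e = 0) (D : G.V → ℤ)
    (E : (G.subdivide n).V → ℤ) :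
    (∃ F, Effective F ∧ G.subdivMap n D - E - F ∈ (G.subdivide n).Prin) ↔
      ∃ F, basePoints {e | moment n e E ≠ 0} ≤ F ∧ D - push n E - F ∈ G.Prin := by
  have hprin : ∀ F, G.subdivMap n D - E - F ∈ (G.subdivide n).Prin ↔
      D - push n E - push n F ∈ G.Prin ∧ ∀ e, moment n e F = -moment n e E := by
    intro F
    simp only [mem_prin_subdivide_iff hn, map_sub, push_subdivMap, moment_subdivMap, zero_sub,
      sub_eq_zero, eq_comm (b := moment n _ F)]
  have heff : ∀ B, basePoints {e | moment n e E ≠ 0} ≤ B ↔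
      ∃ F, Effective F ∧ push n F = B ∧ ∀ e, moment n e F = -moment n e E := by
    intro B
    simp only [exists_effective_iff_basePoints_le hn, ne_eq, neg_eq_zero]
  simp only [hprin, heff]
  constructor
  · rintro ⟨F, hF, hpush, hm⟩
    exact ⟨push n F, ⟨F, hF, rfl, hm⟩, hpush⟩
  · rintro ⟨_, ⟨F, hF, rfl, hm⟩, hpush⟩
    exact ⟨F, hF, hpush, hm⟩

theorem rank_subdivide_eq (hn : ∀ e, (G.IsLoop e → 1 ≤ n e) ∧ (¬ G.IsLoop e → n e = 0))
    (D : G.V → ℤ) :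
    (G.subdivide n).rank (G.subdivMap n D) = sSup {r | r = -1 ∨ (0 ≤ r ∧ RankSharpGE D r)} := by
  have hn_zero := fun e => (hn e).2
  unfold rank
  congr! 6 with r
  simp only [exists_effective_subdivide_iff hn_zero]
  constructor
  · intro h S hS B hSB hdeg
    have hsupp : (Finset.univ.filter fun e =>
        (if e ∈ S then (1 : ZMod (n e + 1)) else 0) ≠ 0) = S := by
      ext e
      have hone : e ∈ S → (1 : ZMod (n e + 1)) ≠ 0 := fun he => by
        have : Fact (1 < n e + 1) := ⟨Nat.lt_succ_of_le ((hn e).1 (hS e he))⟩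
        exact one_ne_zero
      simpa using hone
    rw [← hsupp] at hSB
    obtain ⟨E, hE, rfl, hm⟩ := (exists_effective_iff_basePoints_le hn_zero).2 hSB
    simpa only [hm, hsupp] using h E hE (degree_push n E ▸ hdeg)
  · intro h E hE hdeg
    exact h _ (fun e he => isLoop_of_zmod_ne_zero hn_zero (Finset.mem_filter.1 he).2) _
      (basePoints_le_push hE) ((degree_push n E).trans hdeg)

theorem rankSharp_eq (D : G.V → ℤ) :
    G.rankSharp D = sSup {r | r = -1 ∨ (0 ≤ r ∧ RankSharpGE D r)} :=
  rank_subdivide_eq (fun _ => ⟨fun he => (if_pos he).ge, fun he => if_neg he⟩) D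

end Rank

end Multigraph

open Multigraph in
theorem rankSharp_eq_rank_subdivision_general (G : Multigraph) (n : G.E → ℕ)
    (hn : ∀ e : G.E, (G.IsLoop e → 1 ≤ n e) ∧ (¬ G.IsLoop e → n e = 0)) (D : G.V → ℤ) :
    G.rankSharp D = (G.subdivide n).rank (G.subdivMap n D) :=
  (rankSharp_eq D).trans (rank_subdivide_eq hn D).symm

open Multigraph in
/-- Let `G` be a connected graph; insert `n e ≥ 1` vertices in the
interior of every loop-edge `e` (and none elsewhere) to obtain the refinement
`G^{(n)}`.  Then `r#_G(D) = r_{G^{(n)}}(σ* D)` for every divisor `D` on `G`. -/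
theorem rankSharp_eq_rank_subdivision (G : Multigraph) (hG : G.Connected) (n : G.E → ℕ)
    (hn : ∀ e : G.E, (G.IsLoop e → 1 ≤ n e) ∧ (¬ G.IsLoop e → n e = 0)) (D : G.V → ℤ) :
    G.rankSharp D = (G.subdivide n).rank (G.subdivMap n D) :=
  rankSharp_eq_rank_subdivision_general G n hn D
end

section
/- Let G be a connected graph of genus g = |E(G)| − |V(G)| + 1, possibly with loops, and let K#_G := Σ_{v∈V(G)} (val(v) − 2) v be its canonical divisor. Then deg K#_G = 2g − 2 and r#_G(K#_G) = g − 1. -/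
/-!
Give each vertex a position in a linear order, and let `ν` be the divisor whose value at `v` is the
number of edges from `v` to earlier vertices, minus one. On a loopless graph `ν` has degree `g - 1`,
it is not equivalent to an effective divisor, and the divisor `ν'` of the reversed order satisfies
`ν + ν' = K`. Moreover a divisor is equivalent to an effective one or to one bounded above by
some `ν` (burning).

If `E ≥ 0` has degree `g - 1`, then `K - E` also has degree `g - 1`, so the second case would make
it equivalent to `ν`, hence `ν'` to `E`. Conversely, for a suitable order starting at `q`, the
divisor `ν + r q` is effective for `r ≥ 1`, has degree `g - 1 + r`, and leaves `ν' - r q` when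
subtracted from `K`. This gives `r(K) = g - 1`.

Subdividing the loops changes neither the genus nor the canonical divisor.
-/

namespace Multigraph

open Finset Relation

section Weights

variable {V : Type*} [Fintype V] {a : V → V → ℕ}

variable (a) in
/-- The Laplacian of the graph with `a v w` edges joining `v` and `w`: `laplacian a f` is the effect
on a divisor of each vertex `v` sending `f v` chips along every edge at `v`, and so is the negative
of the usual `div f`. -/
def laplacian : (V → ℤ) →ₗ[ℤ] (V → ℤ) where
  toFun f v := ∑ w, a v w * (f w - f v)
  map_add' f g := by
    ext v
    simp only [Pi.add_apply, ← sum_add_distrib]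
    exact sum_congr rfl fun w _ ↦ by ring
  map_smul' c f := by
    ext v
    simp only [Pi.smul_apply, smul_eq_mul, RingHom.id_apply, mul_sum]
    exact sum_congr rfl fun w _ ↦ by ring

theorem laplacian_apply (f : V → ℤ) (v : V) : laplacian a f v = ∑ w, a v w * (f w - f v) := rfl

theorem sum_laplacian (ha : ∀ v w, a v w = a w v) (f : V → ℤ) : ∑ v, laplacian a f v = 0 := by
  have h : ∑ v, laplacian a f v = -∑ v, laplacian a f v := by
    simp only [laplacian_apply]
    conv_lhs => rw [sum_comm]
    rw [← sum_neg_distrib]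
    refine sum_congr rfl fun v _ ↦ ?_
    rw [← sum_neg_distrib]
    exact sum_congr rfl fun w _ ↦ by rw [ha w v]; ring
  lia

/-! ### Set firings and debt -/

theorem laplacian_indicator_of_mem [DecidableEq V] {S : Finset V} {v : V} (hv : v ∈ S) :
    laplacian a ((S : Set V).indicator 1) v = -∑ w ∈ Sᶜ, (a v w : ℤ) := by
  rw [laplacian_apply, ← sum_add_sum_compl S, sum_eq_zero, zero_add, ← sum_neg_distrib]
  · exact sum_congr rfl fun w hw ↦ by simp [hv, mem_compl.1 hw]
  · exact fun w hw ↦ by simp [hv, hw]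

theorem laplacian_indicator_nonneg {S : Finset V} {v : V} (hv : v ∉ S) :
    0 ≤ laplacian a ((S : Set V).indicator 1) v :=
  sum_nonneg fun w _ ↦ mul_nonneg (Nat.cast_nonneg _) <| by
    simpa [hv] using Set.indicator_nonneg (f := (1 : V → ℤ)) (fun _ _ ↦ zero_le_one) w

/-- The negative part of a divisor, taken in `ℕ` so that the pointwise order of debts is
well-founded. -/
def debt (D : V → ℤ) (v : V) : ℕ := (-D v).toNat

theorem debt_add_laplacian_indicator_le [DecidableEq V] {D : V → ℤ} {S : Finset V}
    (hS : ∀ v ∈ S, ∑ w ∈ Sᶜ, (a v w : ℤ) ≤ D v) :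
    debt (D + laplacian a ((S : Set V).indicator 1)) ≤ debt D := by
  intro v
  simp only [debt, Pi.add_apply]
  by_cases hv : v ∈ S
  · have := hS v hv
    rw [laplacian_indicator_of_mem hv]
    lia
  · have := laplacian_indicator_nonneg (a := a) hv
    lia

/-! ### Finiteness in a linear equivalence class -/

theorem finite_setOf_le_and_sum_eq (b : V → ℤ) (d : ℤ) :
    {D : V → ℤ | b ≤ D ∧ ∑ v, D v = d}.Finite := by
  classical
  refine (Set.finite_Icc b fun v ↦ d - ∑ w ∈ univ.erase v, b w).subset fun D ⟨hb, hd⟩ ↦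
    ⟨hb, fun v ↦ ?_⟩
  have := sum_le_sum fun w (_ : w ∈ univ.erase v) ↦ hb w
  rw [← add_sum_erase _ _ (mem_univ v)] at hd
  lia

theorem eq_of_laplacian_eq_zero (hc : ∀ v w, ReflTransGen (fun x y ↦ a x y ≠ 0) v w) {f : V → ℤ}
    (hf : laplacian a f = 0) (v w : V) : f v = f w := by
  obtain ⟨m, -, hm⟩ := exists_max_image univ f ⟨v, mem_univ v⟩
  suffices h : ∀ x, f x = f m by rw [h v, h w]
  intro x
  induction hc m x with
  | refl => rfl
  | @tail y z _ hyz hy =>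
    have hle : ∀ u ∈ univ, a y u * (f u - f y) ≤ 0 := fun u hu ↦
      mul_nonpos_of_nonneg_of_nonpos (Nat.cast_nonneg _) (by linarith [hm u hu])
    have hzero := (sum_eq_zero_iff_of_nonpos hle).1 (congrFun hf y) z (mem_univ z)
    rcases mul_eq_zero.1 hzero with h | h
    · exact absurd (Nat.cast_eq_zero.1 h) hyz
    · linarith

theorem finite_setOf_le_add_laplacian (ha : ∀ v w, a v w = a w v)
    (hc : ∀ v w, ReflTransGen (fun x y ↦ a x y ≠ 0) v w) (D b : V → ℤ) (q : V) (c : ℤ) :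
    {f : V → ℤ | f q = c ∧ b ≤ D + laplacian a f}.Finite := by
  refine .of_injOn (f := fun f ↦ D + laplacian a f) (t := {D' | b ≤ D' ∧ ∑ v, D' v = ∑ v, D v})
    (fun f hf ↦ ⟨hf.2, ?_⟩) ?_ (finite_setOf_le_and_sum_eq b _)
  · simp [sum_add_distrib, sum_laplacian ha]
  · intro f hf g hg hfg
    have hker : laplacian a (f - g) = 0 := by rw [map_sub, add_left_cancel hfg, sub_self]
    ext v
    simpa [hf.1, hg.1, sub_eq_zero] using eq_of_laplacian_eq_zero hc hker v q

-- Among the representatives of minimal debt there are finitely many scripts `f` fixing a vertex `q`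
-- in debt. If a set could fire from a maximal one, the debt would not change, `q` would not fire,
-- and the script would grow.
theorem exists_nonneg_or_exists_forall_not_fire [DecidableEq V] (ha : ∀ v w, a v w = a w v)
    (hc : ∀ v w, ReflTransGen (fun x y ↦ a x y ≠ 0) v w) (D : V → ℤ) :
    (∃ f, 0 ≤ D + laplacian a f) ∨ ∃ f, ∀ S : Finset V, S.Nonempty →
      ∃ v ∈ S, (D + laplacian a f) v < ∑ w ∈ Sᶜ, (a v w : ℤ) := by
  obtain ⟨f₀, -, hmin⟩ := exists_minimalFor_of_wellFoundedLT (fun _ : V → ℤ ↦ True)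
    (fun f ↦ debt (D + laplacian a f)) ⟨0, trivial⟩
  refine or_iff_not_imp_left.2 fun hneg ↦ ?_
  obtain ⟨q, hq⟩ : ∃ q, (D + laplacian a f₀) q < 0 := by
    by_contra! h
    exact hneg ⟨f₀, h⟩
  set F := {f : V → ℤ | f q = f₀ q ∧ debt (D + laplacian a f) = debt (D + laplacian a f₀)}
  have hfin : F.Finite := by
    refine (finite_setOf_le_add_laplacian ha hc D
      (fun v ↦ -(debt (D + laplacian a f₀) v : ℤ)) q (f₀ q)).subset fun f hf ↦ ⟨hf.1, ?_⟩
    rw [← hf.2]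
    intro v
    simp only [debt]
    lia
  obtain ⟨f, hf, hmax⟩ := hfin.exists_maximal ⟨f₀, rfl, rfl⟩
  refine ⟨f, fun S hS ↦ ?_⟩
  by_contra! hfire
  have hdebt := debt_add_laplacian_indicator_le hfire
  rw [add_assoc, ← map_add, hf.2] at hdebt
  have hqS : q ∉ S := fun h ↦ by
    have hq' := congrFun hf.2 q
    have hpos := (sum_nonneg fun w _ ↦ Nat.cast_nonneg (a q w)).trans (hfire q h)
    simp only [debt] at hq'
    lia
  have hmem : f + (S : Set V).indicator 1 ∈ F :=
    ⟨by simp [hqS, hf.1], le_antisymm hdebt (hmin trivial hdebt)⟩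
  obtain ⟨v, hv⟩ := hS
  have hle := hmax hmem (le_add_of_nonneg_right <|
    Set.indicator_nonneg fun _ _ ↦ zero_le_one) v
  simp [hv] at hle

/-! ### Order divisors -/

variable {α : Type*} [LinearOrder α]

variable (a) in
/-- The divisor `ν_ρ = ∑ v, (#{edges from v to earlier vertices} - 1) v` of Baker and Norine, for
the preorder of the vertices by their rank `ρ`. It is the divisor of an acyclic orientation when `ρ`
is injective. -/
def orderDivisor (ρ : V → α) (v : V) : ℤ :=
  ∑ w with ρ w < ρ v, (a v w : ℤ) - 1

-- The first vertex, for `ρ`, among those where `f` is largest has negative value.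
theorem exists_orderDivisor_add_laplacian_neg [Nonempty V] (ρ : V → α) (f : V → ℤ) :
    ∃ v, (orderDivisor a ρ + laplacian a f) v < 0 := by
  obtain ⟨m, -, hm⟩ := exists_max_image univ f univ_nonempty
  obtain ⟨v, hv, hfirst⟩ := exists_min_image (univ.filter fun v ↦ f v = f m) ρ ⟨m, by simp⟩
  simp only [mem_filter, mem_univ, true_and] at hv hfirst
  have hnonpos : ∑ w with ρ w < ρ v, (a v w : ℤ) + laplacian a f v ≤ 0 := by
    rw [sum_filter, laplacian_apply, ← sum_add_distrib]
    refine sum_nonpos fun w _ ↦ ?_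
    have hw := hm w (mem_univ w)
    split_ifs with hlt
    · have : f w ≠ f m := fun h ↦ (hfirst w h).not_gt hlt
      have : f w - f v ≤ -1 := by lia
      nlinarith
    · have : f w - f v ≤ 0 := by lia
      nlinarith
  refine ⟨v, ?_⟩
  rw [Pi.add_apply, orderDivisor]
  lia

theorem orderDivisor_add_orderDivisor_toDual {ρ : V → α} (hρ : ρ.Injective) (v : V) :
    orderDivisor a ρ v + orderDivisor a (OrderDual.toDual ∘ ρ) v =
      ∑ w, (a v w : ℤ) - a v v - 2 := by
  classical
  have hsplit : univ.filter (fun w ↦ ¬ρ w < ρ v) = insert v (univ.filter fun w ↦ ρ v < ρ w) := by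
    ext w
    simp [le_iff_eq_or_lt, hρ.eq_iff, eq_comm]
  rw [← sum_filter_add_sum_filter_not univ fun w ↦ ρ w < ρ v, hsplit, sum_insert (by simp)]
  simp only [orderDivisor, Function.comp_apply, OrderDual.toDual_lt_toDual]
  ring

theorem sum_orderDivisor_toDual (ha : ∀ v w, a v w = a w v) (ρ : V → α) :
    ∑ v, orderDivisor a (OrderDual.toDual ∘ ρ) v = ∑ v, orderDivisor a ρ v := by
  simp only [orderDivisor, Function.comp_apply, OrderDual.toDual_lt_toDual, sum_sub_distrib,
    sum_filter]
  rw [sum_comm]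
  simp only [ha]

/-! ### Burning -/

theorem exists_injOn_insert_of_lt_sum {V : Type*} [DecidableEq V] {a : V → V → ℕ} {D : V → ℤ}
    {U : Finset V} {ρ : V → ℕ}
    (hinj : Set.InjOn ρ U) (hρ : ∀ x ∈ U, D x < ∑ w ∈ U with ρ w < ρ x, (a x w : ℤ))
    {v : V} (hv : v ∉ U) (hD : D v < ∑ w ∈ U, (a v w : ℤ)) :
    ∃ ρ' : V → ℕ, Set.InjOn ρ' (insert v U : Finset V) ∧
      ∀ x ∈ insert v U, D x < ∑ w ∈ insert v U with ρ' w < ρ' x, (a x w : ℤ) := by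
  set ρ' := Function.update ρ v (U.sup ρ + 1)
  have hself : ρ' v = U.sup ρ + 1 := Function.update_self ..
  have hold : ∀ x ∈ U, ρ' x = ρ x := fun x hx ↦
    Function.update_of_ne (ne_of_mem_of_not_mem hx hv) ..
  have hlt : ∀ x ∈ U, ρ' x < ρ' v := fun x hx ↦ by
    rw [hself, hold x hx, Nat.lt_succ_iff]
    exact le_sup hx
  refine ⟨ρ', ?_, fun x hx ↦ ?_⟩
  · rw [coe_insert, Set.injOn_insert (mod_cast hv)]
    refine ⟨hinj.congr fun x hx ↦ (hold x hx).symm, ?_⟩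
    rintro ⟨x, hx, hxv⟩
    exact (hlt x hx).ne hxv
  · obtain rfl | hx := mem_insert.1 hx
    · rwa [filter_insert, if_neg (lt_irrefl _), filter_true_of_mem hlt]
    · rw [filter_insert, if_neg (hlt x hx).not_gt, hold x hx,
        filter_congr fun w hw ↦ by rw [hold w hw]]
      exact hρ x hx

-- Dhar's burning algorithm: order the vertices as they burn.
theorem exists_injective_le_orderDivisor [DecidableEq V] {D : V → ℤ}
    (hD : ∀ S : Finset V, S.Nonempty → ∃ v ∈ S, D v < ∑ w ∈ Sᶜ, (a v w : ℤ)) :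
    ∃ ρ : V → ℕ, ρ.Injective ∧ D ≤ orderDivisor a ρ := by
  obtain ⟨U, ⟨ρ, hinj, hρ⟩, hmax⟩ := (Set.toFinite {U : Finset V | ∃ ρ : V → ℕ, Set.InjOn ρ U ∧
    ∀ x ∈ U, D x < ∑ w ∈ U with ρ w < ρ x, (a x w : ℤ)}).exists_maximal ⟨∅, 0, by simp, by simp⟩
  obtain rfl : U = univ := by
    by_contra hU
    obtain ⟨v, hv, hDv⟩ := hD Uᶜ (nonempty_iff_ne_empty.2 (by rwa [Ne, compl_eq_empty_iff]))
    rw [compl_compl] at hDv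
    rw [mem_compl] at hv
    exact hv (hmax (exists_injOn_insert_of_lt_sum hinj hρ hv hDv) (subset_insert v U)
      (mem_insert_self v U))
  refine ⟨ρ, by simpa using hinj, fun v ↦ ?_⟩
  have := hρ v (mem_univ v)
  rw [orderDivisor]
  lia

theorem exists_mem_and_exists_notMem_of_reflTransGen {V : Type*} {r : V → V → Prop} {S : Set V}
    {v w : V} (h : ReflTransGen r v w) (hv : v ∈ S) (hw : w ∉ S) : ∃ x ∈ S, ∃ y ∉ S, r x y := by
  contrapose! hw
  induction h with
  | refl => exact hv
  | tail _ hyz hy => exact by_contra fun hz ↦ hw _ hy _ hz hyz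

theorem exists_injective_neg_single_le_orderDivisor [DecidableEq V]
    (hc : ∀ v w, ReflTransGen (fun x y ↦ a x y ≠ 0) v w) (q : V) :
    ∃ ρ : V → ℕ, ρ.Injective ∧ -Pi.single q 1 ≤ orderDivisor a ρ := by
  refine exists_injective_le_orderDivisor fun S ⟨v, hv⟩ ↦ ?_
  by_cases hq : q ∈ S
  · have h : (0 : ℤ) ≤ ∑ w ∈ Sᶜ, (a q w : ℤ) := sum_nonneg fun w _ ↦ Nat.cast_nonneg _
    exact ⟨q, hq, by simpa using neg_one_lt_zero.trans_le h⟩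
  · obtain ⟨x, hx, y, hy, hxy⟩ :=
      exists_mem_and_exists_notMem_of_reflTransGen (S := S) (hc v q) hv hq
    refine ⟨x, hx, ?_⟩
    rw [Pi.neg_apply, Pi.single_eq_of_ne (ne_of_mem_of_not_mem hx hq), neg_zero]
    exact sum_pos' (fun w _ ↦ Nat.cast_nonneg _)
      ⟨y, mem_compl.2 hy, Nat.cast_pos.2 (Nat.pos_of_ne_zero hxy)⟩

theorem exists_nonneg_or_exists_le_orderDivisor (ha : ∀ v w, a v w = a w v)
    (hc : ∀ v w, ReflTransGen (fun x y ↦ a x y ≠ 0) v w) (D : V → ℤ) :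
    (∃ f, 0 ≤ D + laplacian a f) ∨
      ∃ f, ∃ ρ : V → ℕ, ρ.Injective ∧ D + laplacian a f ≤ orderDivisor a ρ := by
  classical
  exact (exists_nonneg_or_exists_forall_not_fire ha hc D).imp_right fun ⟨f, hf⟩ ↦
    ⟨f, exists_injective_le_orderDivisor hf⟩

end Weights

variable (G : Multigraph)

/-! ### Principal divisors and degrees -/

theorem numEdges_comm (v w : G.V) : G.numEdges v w = G.numEdges w v := by
  simp only [numEdges, or_comm]

theorem numEdges_self (v : G.V) : G.numEdges v v = G.numLoops v := by
  simp only [numEdges, numLoops, or_self]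

theorem numEdges_ne_zero_iff {v w : G.V} : G.numEdges v w ≠ 0 ↔ G.Adj v w := by
  simp [numEdges, Adj, Finset.filter_eq_empty_iff, -not_or]

theorem valency_eq (v : G.V) : G.valency v = ∑ w, G.numEdges v w + G.numLoops v := by
  simp only [valency, numEdges, numLoops, card_filter]
  rw [sum_comm, ← sum_add_distrib]
  refine sum_congr rfl fun e _ ↦ ?_
  obtain ⟨x, y⟩ := G.ends e
  simp only [Prod.mk.injEq]
  by_cases hx : x = v <;> by_cases hy : y = v <;> simp [hx, hy]

theorem T_eq_laplacian_single (v : G.V) : G.T v = laplacian G.numEdges (Pi.single v 1) := by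
  ext w
  obtain rfl | h := eq_or_ne v w
  · have hval : (G.valency v : ℤ) = ∑ w, (G.numEdges v w : ℤ) + G.numLoops v :=
      mod_cast G.valency_eq v
    simp only [T, inter, if_true, laplacian_apply, Pi.single_eq_same, mul_sub, mul_one,
      sum_sub_distrib, hval, Pi.single_apply, mul_ite, mul_zero, sum_ite_eq', mem_univ,
      numEdges_self]
    ring
  · simp [T, inter, h, laplacian_apply, Pi.single_apply, h.symm, G.numEdges_comm v w]

theorem mem_Prin_iff {D : G.V → ℤ} : D ∈ G.Prin ↔ ∃ f, laplacian G.numEdges f = D := by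
  have hT : G.T = laplacian G.numEdges ∘ Pi.basisFun ℤ G.V := by
    ext v
    simp [T_eq_laplacian_single]
  rw [Prin, ← Submodule.span_int_eq_addSubgroupClosure, Submodule.mem_toAddSubgroup, hT,
    Set.range_comp, Submodule.span_image, Module.Basis.span_eq, Submodule.map_top,
    LinearMap.mem_range]

theorem sum_valency : ∑ v, G.valency v = 2 * Fintype.card G.E := by
  simp only [valency]
  rw [sum_comm]
  simp [sum_add_distrib, two_mul, mul_two]

theorem degree_canonical : degree G.canonical = 2 * G.genus - 2 := by
  have h : (∑ v, (G.valency v : ℤ)) = 2 * Fintype.card G.E := mod_cast G.sum_valency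
  simp only [degree, canonical, genus, sum_sub_distrib, h, sum_const, card_univ, nsmul_eq_mul]
  ring

/-! ### The rank of the canonical divisor of a loopless graph -/

variable {G}

theorem Connected.reflTransGen_numEdges_ne_zero (hG : G.Connected) (v w : G.V) :
    ReflTransGen (fun x y ↦ G.numEdges x y ≠ 0) v w := by
  simpa only [numEdges_ne_zero_iff] using hG.2 v w

section OrderDivisor

variable {α : Type*} [LinearOrder α] {ρ : G.V → α}

theorem orderDivisor_numEdges_add_toDual (hρ : ρ.Injective) (v : G.V) :
    orderDivisor G.numEdges ρ v + orderDivisor G.numEdges (OrderDual.toDual ∘ ρ) v =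
      G.canonical v - 2 * G.numLoops v := by
  rw [orderDivisor_add_orderDivisor_toDual hρ, canonical, valency_eq, numEdges_self]
  push_cast
  ring

theorem sum_orderDivisor_numEdges (hρ : ρ.Injective) :
    ∑ v, orderDivisor G.numEdges ρ v = G.genus - 1 - ∑ v, (G.numLoops v : ℤ) := by
  have h := sum_congr rfl fun v (_ : v ∈ univ) ↦ orderDivisor_numEdges_add_toDual hρ v
  have hK := G.degree_canonical
  rw [degree] at hK
  rw [sum_add_distrib, sum_orderDivisor_toDual G.numEdges_comm, sum_sub_distrib, ← mul_sum,
    hK] at h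
  lia

end OrderDivisor

theorem Connected.genus_nonneg (hG : G.Connected) : 0 ≤ G.genus := by
  obtain ⟨q⟩ := hG.1
  obtain ⟨ρ, hρ, hq⟩ :=
    exists_injective_neg_single_le_orderDivisor hG.reflTransGen_numEdges_ne_zero q
  have hsum := sum_le_sum fun v (_ : v ∈ univ) ↦ hq v
  have hloops : 0 ≤ ∑ v, (G.numLoops v : ℤ) := sum_nonneg fun v _ ↦ Nat.cast_nonneg _
  simp only [sum_orderDivisor_numEdges hρ, Pi.neg_apply, sum_neg_distrib, sum_pi_single',
    mem_univ, if_true] at hsum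
  lia

theorem Loopless.numLoops_eq_zero (hl : G.Loopless) (v : G.V) : G.numLoops v = 0 := by
  simp only [numLoops, card_eq_zero, filter_eq_empty_iff]
  exact fun e _ he ↦ hl e (by rw [he])

theorem Loopless.exists_effective_canonical_sub (hG : G.Connected) (hl : G.Loopless)
    {E : G.V → ℤ} (hE : Effective E) (hdeg : degree E = G.genus - 1) :
    ∃ F : G.V → ℤ, Effective F ∧ G.canonical - E - F ∈ G.Prin := by
  have := hG.1
  obtain ⟨f, hf⟩ | ⟨f, ρ, hρ, hle⟩ := exists_nonneg_or_exists_le_orderDivisor G.numEdges_comm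
    hG.reflTransGen_numEdges_ne_zero (G.canonical - E)
  · exact ⟨_, hf, G.mem_Prin_iff.2 ⟨-f, by rw [map_neg]; abel⟩⟩
  · exfalso
    have hsum : ∑ v, (G.canonical - E + laplacian G.numEdges f) v =
        ∑ v, orderDivisor G.numEdges ρ v := by
      have hK := G.degree_canonical
      rw [degree] at hK hdeg
      simp only [Pi.add_apply, Pi.sub_apply, sum_add_distrib, sum_sub_distrib,
        sum_laplacian G.numEdges_comm, sum_orderDivisor_numEdges hρ, hl.numLoops_eq_zero, hK, hdeg,
        Nat.cast_zero, sum_const_zero]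
      ring
    obtain ⟨v, hv⟩ := exists_orderDivisor_add_laplacian_neg (a := G.numEdges)
      (OrderDual.toDual ∘ ρ) f
    have heq := (sum_eq_sum_iff_of_le fun v _ ↦ hle v).1 hsum v (mem_univ v)
    have hdual := orderDivisor_numEdges_add_toDual hρ v
    have hEv := hE v
    simp only [Pi.add_apply, Pi.sub_apply, hl.numLoops_eq_zero] at hv heq hdual
    lia

theorem Loopless.exists_canonical_sub_not_effective (hG : G.Connected) (hl : G.Loopless) {r : ℤ}
    (hr : G.genus ≤ r) : ∃ E : G.V → ℤ, Effective E ∧ degree E = r ∧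
      ∀ F : G.V → ℤ, Effective F → G.canonical - E - F ∉ G.Prin := by
  have := hG.1
  obtain ⟨q⟩ := hG.1
  obtain ⟨ρ, hρ, hq⟩ :=
    exists_injective_neg_single_le_orderDivisor hG.reflTransGen_numEdges_ne_zero q
  refine ⟨orderDivisor G.numEdges ρ + Pi.single q (r - G.genus + 1), fun v ↦ ?_, ?_, ?_⟩
  · have hv := hq v
    obtain rfl | h := eq_or_ne v q
    · simp only [Pi.neg_apply, Pi.single_eq_same, Pi.add_apply] at hv ⊢
      lia
    · simpa [h] using hv
  · simp only [degree, Pi.add_apply, sum_add_distrib, sum_orderDivisor_numEdges hρ,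
      hl.numLoops_eq_zero, Nat.cast_zero, sum_const_zero, sum_pi_single', mem_univ, if_true]
    ring
  · rintro F hF hmem
    obtain ⟨f, hf⟩ := G.mem_Prin_iff.1 hmem
    obtain ⟨v, hv⟩ := exists_orderDivisor_add_laplacian_neg (a := G.numEdges)
      (OrderDual.toDual ∘ ρ) (-f)
    have hfv := congrFun hf v
    have hdual := orderDivisor_numEdges_add_toDual hρ v
    have hFv := hF v
    have hsingle : 0 ≤ (Pi.single q (r - G.genus + 1) : G.V → ℤ) v :=
      (Pi.single_nonneg.2 (by lia) : (0 : G.V → ℤ) ≤ _) v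
    simp only [map_neg, Pi.add_apply, Pi.sub_apply, Pi.neg_apply, hl.numLoops_eq_zero]
      at hv hfv hdual
    lia

theorem Loopless.rank_canonical (hG : G.Connected) (hl : G.Loopless) :
    G.rank G.canonical = G.genus - 1 := by
  refine IsGreatest.csSup_eq ⟨?_, ?_⟩
  · obtain h | h := hG.genus_nonneg.eq_or_lt
    · exact .inl (by lia)
    · exact .inr ⟨by lia, fun E hE hdeg ↦ hl.exists_effective_canonical_sub hG hE hdeg⟩
  · rintro r (rfl | ⟨-, hr⟩)
    · linarith [hG.genus_nonneg]
    · by_contra! hlt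
      obtain ⟨E, hE, hdeg, hE'⟩ := hl.exists_canonical_sub_not_effective hG (r := r) (by lia)
      obtain ⟨F, hF, hmem⟩ := hr E hE hdeg
      exact hE' F hF hmem

/-! ### Subdivisions -/

section Subdivision

variable (n : G.E → ℕ)

theorem genus_subdivide : (G.subdivide n).genus = G.genus := by
  have hE : Fintype.card (G.subdivide n).E = Fintype.card (Σ e : G.E, Fin (n e + 1)) :=
    Fintype.card_congr (.refl _)
  have hV : Fintype.card (G.subdivide n).V = Fintype.card (G.V ⊕ Σ e : G.E, Fin (n e)) :=
    Fintype.card_congr (.refl _)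
  simp only [genus, hE, hV, Fintype.card_sum, Fintype.card_sigma, Fintype.card_fin,
    sum_add_distrib, sum_const, card_univ, smul_eq_mul, mul_one]
  push_cast
  ring

variable (e : G.E)

theorem subdivide_ends_zero_fst :
    ((G.subdivide n).ends ⟨e, 0⟩).1 = .inl (G.ends e).1 := by
  simp [subdivide]

theorem subdivide_ends_succ_fst (i : Fin (n e)) :
    ((G.subdivide n).ends ⟨e, i.succ⟩).1 = .inr ⟨e, i⟩ := by
  simp [subdivide]

theorem subdivide_ends_castSucc_snd (i : Fin (n e)) :
    ((G.subdivide n).ends ⟨e, i.castSucc⟩).2 = .inr ⟨e, i⟩ := by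
  simp [subdivide, i.isLt.ne]

theorem subdivide_ends_last_snd :
    ((G.subdivide n).ends ⟨e, .last (n e)⟩).2 = .inl (G.ends e).2 := by
  simp [subdivide]

theorem sum_subdivide_ends {M : Type*} [AddCommMonoid M] (f : (G.subdivide n).V → M) :
    ∑ e, (f ((G.subdivide n).ends e).1 + f ((G.subdivide n).ends e).2) =
      ∑ e, (f (.inl (G.ends e).1) + f (.inl (G.ends e).2)) +
        2 • ∑ x : Σ e : G.E, Fin (n e), f (.inr x) := by
  have h : ∑ e, (f ((G.subdivide n).ends e).1 + f ((G.subdivide n).ends e).2) =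
      ∑ e : G.E, ∑ i : Fin (n e + 1),
        (f ((G.subdivide n).ends ⟨e, i⟩).1 + f ((G.subdivide n).ends ⟨e, i⟩).2) :=
    Fintype.sum_sigma _
  rw [h, Fintype.sum_sigma, smul_sum, ← sum_add_distrib]
  refine sum_congr rfl fun e _ ↦ ?_
  rw [sum_add_distrib, Fin.sum_univ_succ, Fin.sum_univ_castSucc]
  simp only [subdivide_ends_zero_fst, subdivide_ends_succ_fst, subdivide_ends_castSucc_snd,
    subdivide_ends_last_snd]
  abel

theorem valency_subdivide_inl (v : G.V) : (G.subdivide n).valency (.inl v) = G.valency v :=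
  (sum_subdivide_ends n fun x : G.V ⊕ (Σ e : G.E, Fin (n e)) ↦
    if x = .inl v then 1 else 0).trans <| by simp [valency]

theorem valency_subdivide_inr (y : Σ e : G.E, Fin (n e)) :
    (G.subdivide n).valency (.inr y) = 2 :=
  (sum_subdivide_ends n fun x : G.V ⊕ (Σ e : G.E, Fin (n e)) ↦
    if x = .inr y then 1 else 0).trans <| by simp

theorem subdivMap_canonical : G.subdivMap n G.canonical = (G.subdivide n).canonical := by
  ext (v | x)
  · simp [subdivMap, canonical, valency_subdivide_inl]
  · simp [subdivMap, canonical, valency_subdivide_inr]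

theorem Adj.symm {v w : G.V} (h : G.Adj v w) : G.Adj w v := h.imp fun _ ↦ Or.symm

theorem adj_ends (e : G.E) : G.Adj (G.ends e).1 (G.ends e).2 := ⟨e, .inl rfl⟩

theorem reflTransGen_subdivide_ends_fst (i : Fin (n e + 1)) :
    ReflTransGen (G.subdivide n).Adj (.inl (G.ends e).1) ((G.subdivide n).ends ⟨e, i⟩).1 := by
  induction i using Fin.induction with
  | zero =>
    rw [subdivide_ends_zero_fst]
    exact .refl
  | succ i hi =>
    rw [subdivide_ends_succ_fst, ← subdivide_ends_castSucc_snd]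
    exact hi.tail (adj_ends _)

theorem Connected.subdivide (hG : G.Connected) : (G.subdivide n).Connected := by
  have : Std.Symm (G.subdivide n).Adj := ⟨fun _ _ ↦ Adj.symm⟩
  have hsymm {x y} : ReflTransGen (G.subdivide n).Adj x y → ReflTransGen (G.subdivide n).Adj y x :=
    symm
  have hends (e : G.E) :
      ReflTransGen (G.subdivide n).Adj (.inl (G.ends e).1) (.inl (G.ends e).2) := by
    rw [← subdivide_ends_last_snd]
    exact (reflTransGen_subdivide_ends_fst n e _).tail (adj_ends _)
  have hold (v w : G.V) : ReflTransGen (G.subdivide n).Adj (.inl v) (.inl w) := by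
    refine (hG.2 v w).lift' _ fun x y ↦ ?_
    rintro ⟨e, he | he⟩
    · simpa only [he] using hends e
    · simpa only [he] using hsymm (hends e)
  obtain ⟨q⟩ := hG.1
  have hq : ∀ x, ReflTransGen (G.subdivide n).Adj (.inl q) x := by
    rintro (v | ⟨e, i⟩)
    · exact hold q v
    · rw [← subdivide_ends_succ_fst]
      exact (hold q _).trans (reflTransGen_subdivide_ends_fst n e _)
  exact ⟨⟨.inl q⟩, fun x y ↦ (hsymm (hq x)).trans (hq y)⟩

theorem loopless_subdivide (hn : ∀ e, G.IsLoop e → n e ≠ 0) : (G.subdivide n).Loopless := by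
  rintro ⟨e, i⟩ h
  have := hn e
  simp only [subdivide] at h
  split_ifs at h
  · exact this (Sum.inl_injective h) (by lia)
  · have := congrArg (fun s ↦ s.2.1) (Sum.inr_injective h)
    lia

end Subdivision

end Multigraph

open Multigraph in
/-- For a connected graph `G` of genus `g`, the canonical divisor
`K#_G = Σ_v (val(v) - 2) v` has degree `2g - 2` and rank `r#_G(K#_G) = g - 1`. -/
theorem canonical_divisor_degree_and_rank (G : Multigraph) (hG : G.Connected) :
    Multigraph.degree G.canonical = 2 * G.genus - 2 ∧
    G.rankSharp G.canonical = G.genus - 1 := by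
  refine ⟨G.degree_canonical, ?_⟩
  let n := fun e ↦ if (G.ends e).1 = (G.ends e).2 then 1 else 0
  have hl : G.hat.Loopless := loopless_subdivide n fun e (he : _ = _) ↦ by simp [n, he]
  calc G.hat.rank (G.subdivMap n G.canonical)
      = G.hat.rank G.hat.canonical := congrArg _ (subdivMap_canonical n)
    _ = G.hat.genus - 1 := hl.rank_canonical (hG.subdivide n)
    _ = G.genus - 1 := congrArg (· - 1) (genus_subdivide n)
end
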